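/- Let 1 ≤ i < j ≤ n and 1 ≤ k ≤ n. Then for every x ∈ U ∩ S^n, ⟨D_{e_k(x)} e_j(x), e_i(x)⟩ = −x_{i−1} δ_{k,j} / √(s_{i−1}(x) s_i(x)) = −⟨D_{e_k(x)} e_i(x), e_j(x)⟩. (Since e_i is tangent to S^n, these quantities equal the Christoffel symbols ⟨∇_{e_k} e_j, e_i⟩ of the Levi-Civita connection of S^n in the frame e_1, …, e_n.) -/

import Mathlib

open scoped InnerProductSpace BigOperators

noncomputable section

/-- `s_j(x) = ∑_{r=j}^n x_r²`. -/
def sfun (n j : ℕ) (x : EuclideanSpace ℝ (Fin (n + 1))) : ℝ :=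
  ∑ r : Fin (n + 1), if j ≤ (r : ℕ) then x r ^ 2 else 0

/-- The `j`-th coordinate of `x` (read as a natural-number index, `0` out of range). -/
def coordfun (n : ℕ) (x : EuclideanSpace ℝ (Fin (n + 1))) (j : ℕ) : ℝ :=
  if h : j < n + 1 then x ⟨j, h⟩ else 0

/-- The vector field `e_j(x) = √(s_j/s_{j-1}) ( −∂_{j−1} + (x_{j−1}/s_j) Σ_{r=j}^n x_r ∂_r )`. -/
def efun (n j : ℕ) (x : EuclideanSpace ℝ (Fin (n + 1))) : EuclideanSpace ℝ (Fin (n + 1)) :=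
  WithLp.toLp 2 fun r => Real.sqrt (sfun n j x / sfun n (j - 1) x) *
    (-(if (r : ℕ) = j - 1 then 1 else 0)
      + coordfun n x (j - 1) / sfun n j x * (if j ≤ (r : ℕ) then x r else 0))

/-- `U = {x ∈ ℝ^{n+1} : x_n > 0}`. -/
def Usph (n : ℕ) : Set (EuclideanSpace ℝ (Fin (n + 1))) := {x | 0 < coordfun n x n}

/-- The unit sphere `S^n ⊂ ℝ^{n+1}`. -/
def sph (n : ℕ) : Set (EuclideanSpace ℝ (Fin (n + 1))) :=
  {x | ∑ r : Fin (n + 1), x r ^ 2 = 1}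

theorem coordfun_of_le {n j : ℕ} (h : j ≤ n) (x : EuclideanSpace ℝ (Fin (n + 1))) :
    coordfun n x j = x ⟨j, Nat.lt_succ_of_le h⟩ := by
  simp [coordfun, Nat.lt_succ_of_le h]

theorem sfun_eq_coordfun_sq_add {n j : ℕ} (h : j ≤ n) (x : EuclideanSpace ℝ (Fin (n + 1))) :
    sfun n j x = coordfun n x j ^ 2 + sfun n (j + 1) x := by
  have key : ∀ r : Fin (n + 1), (if j ≤ (r : ℕ) then x r ^ 2 else 0) =
      (if r = ⟨j, Nat.lt_succ_of_le h⟩ then x r ^ 2 else 0)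
        + (if j + 1 ≤ (r : ℕ) then x r ^ 2 else 0) := by
    intro r
    rcases lt_trichotomy j (r : ℕ) with hr | hr | hr
    · simp [Fin.ext_iff, hr.le, hr.ne', Nat.succ_le_of_lt hr]
    · simp [Fin.ext_iff, ← hr]
    · simp [Fin.ext_iff, hr.not_ge, hr.ne, (hr.trans (Nat.lt_succ_self j)).not_ge]
  rw [coordfun_of_le h]
  simp only [sfun, key, Finset.sum_add_distrib]
  simp

theorem sfun_pos {n j : ℕ} (h : j ≤ n) {x : EuclideanSpace ℝ (Fin (n + 1))}
    (hx : x ∈ Usph n) : 0 < sfun n j x := by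
  have hx' : 0 < coordfun n x n := hx
  rw [coordfun_of_le le_rfl] at hx'
  refine Finset.sum_pos' (fun r _ => by split_ifs <;> positivity)
    ⟨⟨n, Nat.lt_succ_self n⟩, Finset.mem_univ _, ?_⟩
  simp only [h, if_true]
  positivity

theorem isOpen_Usph (n : ℕ) : IsOpen (Usph n) := by
  have : Usph n = {x | 0 < x ⟨n, Nat.lt_succ_self n⟩} := by
    ext x
    simp [Usph, coordfun_of_le le_rfl]
  rw [this]
  exact isOpen_lt continuous_const (by fun_prop)

theorem inner_efun_succ {n j : ℕ} (h : j ≤ n) (w x : EuclideanSpace ℝ (Fin (n + 1))) :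
    ⟪w, efun n (j + 1) x⟫_ℝ = Real.sqrt (sfun n (j + 1) x / sfun n j x) *
      (-coordfun n w j + coordfun n x j / sfun n (j + 1) x *
        ∑ r : Fin (n + 1), if j + 1 ≤ (r : ℕ) then w r * x r else 0) := by
  have key : ∀ r : Fin (n + 1), ⟪w r, efun n (j + 1) x r⟫_ℝ =
      Real.sqrt (sfun n (j + 1) x / sfun n j x) *
        (-(if r = ⟨j, Nat.lt_succ_of_le h⟩ then w r else 0) +
          coordfun n x j / sfun n (j + 1) x * (if j + 1 ≤ (r : ℕ) then w r * x r else 0)) := by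
    intro r
    simp only [efun, Nat.add_sub_cancel, Fin.ext_iff, RCLike.inner_apply, conj_trivial]
    split_ifs <;> ring
  rw [PiLp.inner_apply, Finset.sum_congr rfl fun r _ => key r, ← Finset.mul_sum,
    Finset.sum_add_distrib, ← Finset.mul_sum, coordfun_of_le h w]
  simp

theorem inner_self_efun_succ {n j : ℕ} (h : j + 1 ≤ n) {x : EuclideanSpace ℝ (Fin (n + 1))}
    (hx : x ∈ Usph n) : ⟪x, efun n (j + 1) x⟫_ℝ = 0 := by
  have hs : (∑ r : Fin (n + 1), if j + 1 ≤ (r : ℕ) then x r * x r else 0) =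
      sfun n (j + 1) x := by simp only [sfun, sq]
  rw [inner_efun_succ (by omega), hs, div_mul_cancel₀ _ (sfun_pos h hx).ne']
  simp

/-- A vector supported on the coordinates with index greater than `j` sees `efun n (j + 1) x` as
a multiple of `x`. -/
theorem inner_efun_succ_of_support {n j : ℕ} (h : j ≤ n) {w : EuclideanSpace ℝ (Fin (n + 1))}
    (hw : ∀ r : Fin (n + 1), (r : ℕ) ≤ j → w r = 0) (x : EuclideanSpace ℝ (Fin (n + 1))) :
    ⟪w, efun n (j + 1) x⟫_ℝ = Real.sqrt (sfun n (j + 1) x / sfun n j x) *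
      (coordfun n x j / sfun n (j + 1) x) * ⟪w, x⟫_ℝ := by
  have hs : (∑ r : Fin (n + 1), if j + 1 ≤ (r : ℕ) then w r * x r else 0) = ⟪w, x⟫_ℝ := by
    rw [PiLp.inner_apply]
    refine Finset.sum_congr rfl fun r _ => ?_
    split_ifs with hr
    · simp [mul_comm]
    · simp [hw r (by omega)]
  rw [inner_efun_succ h, hs, coordfun_of_le h w, hw _ le_rfl]
  ring

theorem efun_succ_apply_eq_zero {n j : ℕ} (x : EuclideanSpace ℝ (Fin (n + 1)))
    {r : Fin (n + 1)} (hr : (r : ℕ) < j) : efun n (j + 1) x r = 0 := by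
  have h1 : ¬ j + 1 ≤ (r : ℕ) := by omega
  simp only [efun, Nat.add_sub_cancel, hr.ne, h1, if_false, neg_zero, mul_zero, add_zero]

theorem inner_efun_succ_efun_succ_of_lt {n i j : ℕ} (hij : i < j) (hj : j + 1 ≤ n)
    {x : EuclideanSpace ℝ (Fin (n + 1))} (hx : x ∈ Usph n) :
    ⟪efun n (j + 1) x, efun n (i + 1) x⟫_ℝ = 0 := by
  rw [inner_efun_succ_of_support (by omega)
    (fun r hr => efun_succ_apply_eq_zero x (hr.trans_lt hij)), real_inner_comm,
    inner_self_efun_succ hj hx, mul_zero]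

theorem inner_efun_succ_self {n j : ℕ} (hj : j + 1 ≤ n)
    {x : EuclideanSpace ℝ (Fin (n + 1))} (hx : x ∈ Usph n) :
    ⟪efun n (j + 1) x, efun n (j + 1) x⟫_ℝ = 1 := by
  have hpos := sfun_pos hj hx
  have hpos' := sfun_pos (j := j) (by omega) hx
  have hrec := sfun_eq_coordfun_sq_add (j := j) (by omega) x
  have hs : (∑ r : Fin (n + 1), if j + 1 ≤ (r : ℕ) then efun n (j + 1) x r * x r else 0) =
      Real.sqrt (sfun n (j + 1) x / sfun n j x) * coordfun n x j := by
    have key : ∀ r : Fin (n + 1),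
        (if j + 1 ≤ (r : ℕ) then efun n (j + 1) x r * x r else 0) =
        Real.sqrt (sfun n (j + 1) x / sfun n j x) * (coordfun n x j / sfun n (j + 1) x) *
          (if j + 1 ≤ (r : ℕ) then x r ^ 2 else 0) := by
      intro r
      split_ifs with hr
      · have h1 : (r : ℕ) ≠ j := by omega
        simp only [efun, Nat.add_sub_cancel, hr, h1, if_true, if_false]
        ring
      · simp
    rw [Finset.sum_congr rfl fun r _ => key r, ← Finset.mul_sum]
    change _ * sfun n (j + 1) x = _
    field_simp
  have hc : coordfun n (efun n (j + 1) x) j = -Real.sqrt (sfun n (j + 1) x / sfun n j x) := by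
    rw [coordfun_of_le (by omega)]
    simp [efun]
  have hsq := Real.sq_sqrt (div_pos hpos hpos').le
  rw [inner_efun_succ (by omega), hs, hc]
  calc _ = Real.sqrt (sfun n (j + 1) x / sfun n j x) ^ 2 *
        (1 + coordfun n x j ^ 2 / sfun n (j + 1) x) := by ring
    _ = 1 := by
      rw [hsq]
      field_simp
      linarith

theorem inner_efun_succ_efun_succ {n j k : ℕ} (hj : j + 1 ≤ n) (hk : k + 1 ≤ n)
    {x : EuclideanSpace ℝ (Fin (n + 1))} (hx : x ∈ Usph n) :
    ⟪efun n (j + 1) x, efun n (k + 1) x⟫_ℝ = if k = j then 1 else 0 := by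
  rcases lt_trichotomy k j with h | rfl | h
  · rw [if_neg h.ne, inner_efun_succ_efun_succ_of_lt h hj hx]
  · rw [if_pos rfl, inner_efun_succ_self hj hx]
  · rw [if_neg h.ne', real_inner_comm, inner_efun_succ_efun_succ_of_lt h hk hx]

theorem differentiable_sfun (n j : ℕ) : Differentiable ℝ (sfun n j) := by
  unfold sfun
  refine Differentiable.fun_sum fun r _ => ?_
  split_ifs <;> fun_prop

theorem differentiable_coordfun (n j : ℕ) : Differentiable ℝ fun x => coordfun n x j := by
  unfold coordfun
  split_ifs <;> fun_prop

theorem differentiableAt_efun_succ {n j : ℕ} (hj : j + 1 ≤ n)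
    {x : EuclideanSpace ℝ (Fin (n + 1))} (hx : x ∈ Usph n) :
    DifferentiableAt ℝ (efun n (j + 1)) x := by
  have hpos := sfun_pos hj hx
  have hpos' := sfun_pos (j := j) (by omega) hx
  have hs := differentiable_sfun n (j + 1) x
  have hs' := differentiable_sfun n j x
  have hc := differentiable_coordfun n j x
  rw [differentiableAt_euclidean]
  intro r
  simp only [efun, Nat.add_sub_cancel, div_eq_mul_inv]
  refine ((hs.fun_mul (hs'.fun_inv hpos'.ne')).sqrt (mul_pos hpos (inv_pos.2 hpos')).ne').mul
    ((differentiableAt_const _).add ((hc.fun_mul (hs.fun_inv hpos.ne')).mul ?_))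
  split_ifs <;> fun_prop

/-- Differentiating `⟪f, g⟫ = const` near `x`. -/
theorem inner_fderiv_eq_neg_of_eventually_inner_eq {E F : Type*} [NormedAddCommGroup E]
    [NormedSpace ℝ E] [NormedAddCommGroup F] [InnerProductSpace ℝ F] {f g : E → F} {x : E}
    {c : ℝ} (hf : DifferentiableAt ℝ f x) (hg : DifferentiableAt ℝ g x)
    (hfg : ∀ᶠ y in nhds x, ⟪f y, g y⟫_ℝ = c) (v : E) :
    ⟪fderiv ℝ f x v, g x⟫_ℝ = -⟪fderiv ℝ g x v, f x⟫_ℝ := by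
  have h := fderiv_inner_apply (𝕜 := ℝ) hf hg v
  have h0 : fderiv ℝ (fun y => ⟪f y, g y⟫_ℝ) x = 0 := by
    rw [Filter.EventuallyEq.fderiv_eq (f := fun _ => c) hfg]
    simp
  rw [h0, zero_apply, real_inner_comm] at h
  linarith

theorem inner_fderiv_efun_succ {n i j k : ℕ} (hij : i < j) (hj : j + 1 ≤ n) (hk : k + 1 ≤ n)
    {x : EuclideanSpace ℝ (Fin (n + 1))} (hx : x ∈ Usph n) :
    ⟪fderiv ℝ (efun n (j + 1)) x (efun n (k + 1) x), efun n (i + 1) x⟫_ℝ =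
      -(coordfun n x i * (if k = j then 1 else 0)) /
        Real.sqrt (sfun n i x * sfun n (i + 1) x) := by
  have hpos := sfun_pos (j := i + 1) (by omega) hx
  have hpos' := sfun_pos (j := i) (by omega) hx
  have hd := differentiableAt_efun_succ hj hx
  set v := efun n (k + 1) x
  have hradial : ⟪fderiv ℝ (efun n (j + 1)) x v, x⟫_ℝ = -(if k = j then 1 else 0) := by
    have h := inner_fderiv_eq_neg_of_eventually_inner_eq hd differentiableAt_id (c := 0)
      (Filter.eventually_of_mem ((isOpen_Usph n).mem_nhds hx)
        fun y hy => by rw [real_inner_comm]; exact inner_self_efun_succ hj hy) v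
    rw [fderiv_id, ContinuousLinearMap.id_apply, real_inner_comm _ v] at h
    rw [← inner_efun_succ_efun_succ hj hk hx]
    exact h
  have hsupp : ∀ r : Fin (n + 1), (r : ℕ) ≤ i → fderiv ℝ (efun n (j + 1)) x v r = 0 := by
    intro r hr
    have h := (hasFDerivWithinAt_euclidean.1 hd.hasFDerivAt.hasFDerivWithinAt r).hasFDerivAt
      Filter.univ_mem |>.unique ((hasFDerivAt_const (0 : ℝ) x).congr_of_eventuallyEq
        (Filter.Eventually.of_forall fun y => efun_succ_apply_eq_zero y (hr.trans_lt hij)))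
    exact DFunLike.congr_fun h v
  rw [inner_efun_succ_of_support (by omega) hsupp, hradial, Real.sqrt_div hpos.le,
    Real.sqrt_mul hpos'.le]
  have h1 := Real.sqrt_pos.2 hpos
  have h2 := Real.sqrt_pos.2 hpos'
  have h3 := Real.sq_sqrt hpos.le
  field_simp
  rw [h3]
  ring

/-- Lemma 6 (Lemma `\ref{LemmaGamma}`): for `1 ≤ i < j ≤ n`, `1 ≤ k ≤ n` and `x ∈ U ∩ S^n`,
`⟨D_{e_k(x)} e_j(x), e_i(x)⟩ = −x_{i−1} δ_{k,j} / √(s_{i−1}(x) s_i(x)) = −⟨D_{e_k(x)} e_i(x), e_j(x)⟩`. -/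
theorem statement1 (n i j k : ℕ) (hi : 1 ≤ i) (hij : i < j) (hj : j ≤ n)
    (hk : 1 ≤ k) (hkn : k ≤ n)
    (x : EuclideanSpace ℝ (Fin (n + 1))) (hxU : x ∈ Usph n) (hxS : x ∈ sph n) :
    ⟪fderiv ℝ (efun n j) x (efun n k x), efun n i x⟫_ℝ
        = -(coordfun n x (i - 1) * (if k = j then 1 else 0))
            / Real.sqrt (sfun n (i - 1) x * sfun n i x) ∧
    ⟪fderiv ℝ (efun n j) x (efun n k x), efun n i x⟫_ℝ
        = -⟪fderiv ℝ (efun n i) x (efun n k x), efun n j x⟫_ℝ := by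
  obtain ⟨i, rfl⟩ := Nat.exists_eq_add_of_le' hi
  obtain ⟨j, rfl⟩ := Nat.exists_eq_add_of_le' (hi.trans hij.le)
  obtain ⟨k, rfl⟩ := Nat.exists_eq_add_of_le' hk
  have hij' : i < j := by omega
  constructor
  · simpa using inner_fderiv_efun_succ hij' hj hkn hxU
  · exact inner_fderiv_eq_neg_of_eventually_inner_eq (differentiableAt_efun_succ hj hxU)
      (differentiableAt_efun_succ (by omega) hxU)
      (Filter.eventually_of_mem ((isOpen_Usph n).mem_nhds hxU)
        fun y hy => inner_efun_succ_efun_succ_of_lt hij' hj hy) _
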